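/- For each integer n ≥ 2 define I_n(x) = ∫₀^x sin^{n−1}(s) ds, W_{n−1} = ∫₀^{π/2} sin^{n−1}(s) ds, and V_n = (2/(2W_{n−1})²) · ∫₀^π (I_n(u)²/sin^{n−1}(u)) · ( ∫_u^π (2W_{n−1} − I_n(s))² / sin^{n−1}(s) ds ) du. Then (n−1)²·V_n converges to π²/6 as n → ∞. -/

import Mathlib

open Real Filter

/-!
Write `m = n - 1` and `I s = ∫ u in 0..s, sin u ^ m`. By symmetry the iterated integral in `V n`
is the squared `L²` norm, for the weight `sin ^ m` in both variables, of the kernel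
`K s t = (I (min s t) - I s * I t / I π) / (sin s ^ m * sin t ^ m)`, whose numerator is the
covariance of the indicators of the spherical caps of radii `s` and `t`. Parseval's identity for
these indicators in the zonal (ultraspherical) eigenfunctions of the Laplacian on the `n`-sphere
diagonalises `K`: integrating an eigenfunction over a cap produces, up to a power of `sin`, an
ultraspherical polynomial for the weight `sin ^ (m + 2)`, and these are orthogonal again. The
eigenvalues of `K` are `1 / (k * (k + m))` for `k ≥ 1`, so `V n = ∑ 1 / (k * (k + m)) ^ 2`, and
dominated convergence gives `m ^ 2 * V n → ∑ 1 / k ^ 2 = π ^ 2 / 6`.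
-/

section OrthogonalParseval

open MeasureTheory Polynomial Submodule

theorem hasSum_inner_mul_inner_div_norm_sq {ι 𝕜 E : Type*} [RCLike 𝕜] [NormedAddCommGroup E]
    [InnerProductSpace 𝕜 E] [CompleteSpace E] {v : ι → E} (hv : ∀ k, v k ≠ 0)
    (horth : Pairwise fun j k => inner 𝕜 (v j) (v k) = 0)
    (hspan : (span 𝕜 (Set.range v)).topologicalClosure = ⊤) (x y : E) :
    HasSum (fun k => inner 𝕜 x (v k) * inner 𝕜 (v k) y / (‖v k‖ : 𝕜) ^ 2) (inner 𝕜 x y) := by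
  have hnorm (k : ι) : (‖v k‖ : 𝕜) ≠ 0 := by simpa using hv k
  let e : ι → E := fun k => (‖v k‖ : 𝕜)⁻¹ • v k
  have he : Orthonormal 𝕜 e :=
    ⟨fun k => norm_smul_inv_norm (hv k), fun j k hjk => by
      simp only [e, inner_smul_left, inner_smul_right, horth hjk, mul_zero]⟩
  have hspan_le : span 𝕜 (Set.range v) ≤ span 𝕜 (Set.range e) := by
    rw [span_le]
    rintro _ ⟨k, rfl⟩
    have hvk : v k = (‖v k‖ : 𝕜) • e k := by simp only [e, smul_inv_smul₀ (hnorm k)]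
    rw [hvk]
    exact smul_mem _ _ (subset_span ⟨k, rfl⟩)
  have hdense : ⊤ ≤ (span 𝕜 (Set.range e)).topologicalClosure :=
    hspan.ge.trans (topologicalClosure_mono hspan_le)
  refine ((HilbertBasis.mk he hdense).hasSum_inner_mul_inner x y).congr_fun fun k => ?_
  simp only [HilbertBasis.coe_mk, e, inner_smul_left, inner_smul_right, map_inv₀,
    RCLike.conj_ofReal]
  field_simp

theorem topologicalClosure_span_toLp_aeval_eq_top {X : Type*} [TopologicalSpace X]
    [CompactSpace X] [NormalSpace X] [MeasurableSpace X] [BorelSpace X] (μ : Measure X)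
    [IsFiniteMeasure μ] [μ.WeaklyRegular] {f : C(X, ℝ)} (hf : Function.Injective f)
    (S : Polynomial.Sequence ℝ) {p : ENNReal} [Fact (1 ≤ p)] (hp : p ≠ ⊤) :
    (span ℝ (Set.range fun k => ContinuousMap.toLp p μ ℝ (aeval f (S k)))).topologicalClosure
      = ⊤ := by
  have hspan : span ℝ (Set.range fun k => aeval f (S k))
      = Subalgebra.toSubmodule (aeval f : ℝ[X] →ₐ[ℝ] C(X, ℝ)).range := by
    have hS : span ℝ (Set.range S) = ⊤ :=
      S.span fun k => (leadingCoeff_ne_zero.2 (S.ne_zero k)).isUnit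
    calc span ℝ (Set.range fun k => aeval f (S k))
        = (span ℝ (Set.range S)).map (aeval f).toLinearMap := by
          rw [map_span, ← Set.range_comp]
          rfl
      _ = Subalgebra.toSubmodule (aeval f).range := by
          rw [hS, Submodule.map_top]
          rfl
  have hsep : (aeval f : ℝ[X] →ₐ[ℝ] C(X, ℝ)).range.SeparatesPoints := fun x y hxy =>
    ⟨f, ⟨f, ⟨Polynomial.X, aeval_X f⟩, rfl⟩, hf.ne hxy⟩
  have hdense : (span ℝ (Set.range fun k => aeval f (S k))).topologicalClosure = ⊤ := by
    rw [hspan]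
    exact congrArg Subalgebra.toSubmodule
      (ContinuousMap.subalgebra_topologicalClosure_eq_top_of_separatesPoints _ hsep)
  have := (ContinuousMap.toLp_denseRange ℝ μ ℝ hp).topologicalClosure_map_submodule hdense
  rwa [map_span, ← Set.range_comp] at this

theorem hasSum_setIntegral_mul_setIntegral_div_integral_sq {X : Type*} [TopologicalSpace X]
    [CompactSpace X] [NormalSpace X] [MeasurableSpace X] [BorelSpace X] {μ : Measure X}
    [IsFiniteMeasure μ] [μ.WeaklyRegular] {f : C(X, ℝ)} (hf : Function.Injective f)
    (S : Polynomial.Sequence ℝ)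
    (horth : Pairwise fun j k => ∫ x, (S j).eval (f x) * (S k).eval (f x) ∂μ = 0)
    (hpos : ∀ k, 0 < ∫ x, (S k).eval (f x) ^ 2 ∂μ)
    {A B : Set X} (hA : MeasurableSet A) (hB : MeasurableSet B) :
    HasSum (fun k => (∫ x in A, (S k).eval (f x) ∂μ) * (∫ x in B, (S k).eval (f x) ∂μ)
      / ∫ x, (S k).eval (f x) ^ 2 ∂μ) (μ.real (A ∩ B)) := by
  let v : ℕ → Lp ℝ 2 μ := fun k => ContinuousMap.toLp 2 μ ℝ (aeval f (S k))
  have hinner (j k : ℕ) : inner ℝ (v j) (v k) = ∫ x, (S j).eval (f x) * (S k).eval (f x) ∂μ := by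
    simp only [v, ContinuousMap.inner_toLp, aeval_continuousMap_apply, conj_trivial, mul_comm]
  have hnorm (k : ℕ) : ‖v k‖ ^ 2 = ∫ x, (S k).eval (f x) ^ 2 ∂μ := by
    rw [← real_inner_self_eq_norm_sq, hinner]
    simp only [sq]
  have hset {D : Set X} (hD : MeasurableSet D) (k : ℕ) :
      inner ℝ (indicatorConstLp 2 hD (measure_ne_top μ D) (1 : ℝ)) (v k)
        = ∫ x in D, (S k).eval (f x) ∂μ := by
    rw [L2.inner_indicatorConstLp_one]
    refine setIntegral_congr_ae hD ?_
    filter_upwards [ContinuousMap.coeFn_toLp (p := 2) (𝕜 := ℝ) μ (aeval f (S k))] with x hx _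
    rw [hx, aeval_continuousMap_apply]
  have hv (k : ℕ) : v k ≠ 0 := fun h0 => by
    have := hnorm k
    rw [h0, norm_zero] at this
    linarith [hpos k]
  have hsum := hasSum_inner_mul_inner_div_norm_sq (𝕜 := ℝ) hv
    (fun j k hjk => (hinner j k).trans (horth hjk))
    (topologicalClosure_span_toLp_aeval_eq_top μ hf S ENNReal.ofNat_ne_top)
    (indicatorConstLp 2 hA (measure_ne_top μ A) (1 : ℝ))
    (indicatorConstLp 2 hB (measure_ne_top μ B) (1 : ℝ))
  rw [L2.real_inner_indicatorConstLp_one_indicatorConstLp_one hA hB] at hsum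
  refine hsum.congr_fun fun k => ?_
  rw [real_inner_comm _ (v k), hset hB, hset hA, RCLike.ofReal_real_eq_id, id, hnorm]

end OrthogonalParseval

section DoubleIntegrals

open MeasureTheory

theorem integral_prod_self_eq_two_smul_integral_setIntegral_Ioi {α E : Type*} [LinearOrder α]
    [TopologicalSpace α] [OrderClosedTopology α] [SecondCountableTopology α] [MeasurableSpace α]
    [OpensMeasurableSpace α] [NormedAddCommGroup E] [NormedSpace ℝ E] {μ : Measure α} [SFinite μ]
    [NullSingletonClass μ] {F : α × α → E} (hF : Integrable F (μ.prod μ))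
    (hsymm : ∀ p, F p.swap = F p) :
    ∫ p, F p ∂(μ.prod μ) = (2 : ℝ) • ∫ x, ∫ y in Set.Ioi x, F (x, y) ∂μ ∂μ := by
  have hlt : MeasurableSet {p : α × α | p.1 < p.2} := measurableSet_lt measurable_fst measurable_snd
  have hlower : ∫ p in {p : α × α | p.1 < p.2}, F p ∂(μ.prod μ)
      = ∫ x, ∫ y in Set.Ioi x, F (x, y) ∂μ ∂μ := by
    rw [← integral_indicator hlt, integral_prod _ (hF.indicator hlt)]
    refine integral_congr_ae (.of_forall fun x => ?_)
    exact integral_indicator (f := fun y => F (x, y)) measurableSet_Ioi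
  have hupper : ∫ p in {p : α × α | p.1 < p.2}ᶜ, F p ∂(μ.prod μ)
      = ∫ x, ∫ y in Set.Ioi x, F (x, y) ∂μ ∂μ := by
    rw [← integral_indicator hlt.compl, integral_prod_symm _ (hF.indicator hlt.compl)]
    refine integral_congr_ae (.of_forall fun x => ?_)
    beta_reduce
    rw [← integral_Ici_eq_integral_Ioi, ← integral_indicator measurableSet_Ici]
    refine integral_congr_ae (.of_forall fun y => ?_)
    simp only [Set.indicator_apply, Set.mem_compl_iff, Set.mem_ofPred_eq, not_lt,
      Set.mem_Ici, ← hsymm (y, x), Prod.swap]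
  rw [← integral_add_compl hlt hF, hlower, hupper, two_smul]

theorem sq_integral_norm_mul_norm_le {α E : Type*} [MeasurableSpace α] {μ : Measure α}
    [NormedAddCommGroup E] {f g : α → E} (hf : MemLp f 2 μ) (hg : MemLp g 2 μ) :
    (∫ x, ‖f x‖ * ‖g x‖ ∂μ) ^ 2 ≤ (∫ x, ‖f x‖ ^ 2 ∂μ) * ∫ x, ‖g x‖ ^ 2 ∂μ := by
  have hholder := integral_mul_norm_le_Lp_mul_Lq (f := f) (g := g) .two_two
    (by rwa [ENNReal.ofReal_ofNat]) (by rwa [ENNReal.ofReal_ofNat])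
  simp only [← Real.sqrt_eq_rpow, Real.rpow_two] at hholder
  rw [← Real.sqrt_mul (by positivity)] at hholder
  exact (Real.le_sqrt (by positivity) (by positivity)).1 hholder

theorem hasSum_sq_integral_sq_of_hasSum_mul {ι α : Type*} [Countable ι] [MeasurableSpace α]
    {μ : Measure α} [SFinite μ] {ψ : ι → α → ℝ} {c : ι → ℝ} {K : α → α → ℝ}
    (hψ : ∀ k, MemLp (ψ k) 2 μ) (horth : Pairwise fun j k => ∫ x, ψ j x * ψ k x ∂μ = 0)
    (hnorm : ∀ k, ∫ x, ψ k x ^ 2 ∂μ = c k) (hc : Summable c)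
    (hK : ∀ x y, HasSum (fun k => ψ k x * ψ k y) (K x y)) :
    HasSum (fun k => c k ^ 2) (∫ p, K p.1 p.2 ^ 2 ∂(μ.prod μ)) := by
  let g : ι × ι → α → ℝ := fun i x => ψ i.1 x * ψ i.2 x
  have hg (i : ι × ι) : Integrable (g i) μ := (hψ i.1).integrable_mul (hψ i.2)
  have hsq (p : α × α) : ∑' i, g i p.1 * g i p.2 = K p.1 p.2 ^ 2 := by
    have hKp := hK p.1 p.2
    have hmul := hKp.mul hKp (summable_mul_of_summable_norm hKp.summable.norm hKp.summable.norm)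
    rw [sq, ← hmul.tsum_eq]
    exact tsum_congr fun i => mul_mul_mul_comm ..
  have hnorm_le (i : ι × ι) : ∫ p, ‖g i p.1 * g i p.2‖ ∂(μ.prod μ) ≤ c i.1 * c i.2 := by
    simp only [norm_mul (g i _)]
    rw [integral_prod_mul (fun x => ‖g i x‖) (fun y => ‖g i y‖), ← sq, ← hnorm, ← hnorm]
    simpa only [g, norm_mul, Real.norm_eq_abs, sq_abs]
      using sq_integral_norm_mul_norm_le (hψ i.1) (hψ i.2)
  have hsummable : Summable fun i => ∫ p, ‖g i p.1 * g i p.2‖ ∂(μ.prod μ) :=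
    .of_nonneg_of_le (fun i => integral_nonneg fun p => norm_nonneg _) hnorm_le
      (summable_mul_of_summable_norm hc.norm hc.norm)
  have hsum := hasSum_integral_of_summable_integral_norm
    (fun i => (hg i).mul_prod (hg i)) hsummable
  simp only [hsq, integral_prod_mul, ← sq] at hsum
  have hdiag : Function.Injective fun k : ι => (k, k) := fun _ _ h => congrArg Prod.fst h
  rw [← hdiag.hasSum_iff] at hsum
  · simpa only [Function.comp_def, g, ← sq, hnorm] using hsum
  · rintro ⟨j, k⟩ hjk
    have hne : j ≠ k := fun h => hjk ⟨j, by rw [h]⟩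
    simp only [g, horth hne, ne_eq, OfNat.ofNat_ne_zero, not_false_eq_true, zero_pow]

end DoubleIntegrals

section SphereEigenvalue

/-- The `k`-th eigenvalue of minus the Laplacian on the `(m + 1)`-dimensional unit sphere. -/
def sphereEigenvalue (m k : ℕ) : ℝ := k * (k + m)

theorem sphereEigenvalue_succ_pos (m k : ℕ) : 0 < sphereEigenvalue m (k + 1) := by
  unfold sphereEigenvalue
  positivity

theorem sphereEigenvalue_add_two_add (m k : ℕ) :
    sphereEigenvalue (m + 2) k + (m + 1) = sphereEigenvalue m (k + 1) := by
  simp only [sphereEigenvalue, Nat.cast_add, Nat.cast_ofNat, Nat.cast_one]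
  ring

theorem one_div_sphereEigenvalue_succ_le (m k : ℕ) :
    1 / sphereEigenvalue m (k + 1) ≤ 1 / ((k : ℝ) + 1) ^ 2 := by
  refine one_div_le_one_div_of_le (by positivity) ?_
  rw [sphereEigenvalue, Nat.cast_add_one]
  nlinarith [show (0 : ℝ) ≤ (k + 1) * m by positivity]

theorem hasSum_one_div_succ_sq : HasSum (fun k : ℕ => 1 / ((k : ℝ) + 1) ^ 2) (π ^ 2 / 6) := by
  simpa using (hasSum_nat_add_iff' 1).2 hasSum_zeta_two

theorem tendsto_sq_mul_tsum_one_div_sphereEigenvalue_sq :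
    Tendsto (fun m : ℕ => (m : ℝ) ^ 2 * ∑' k, (1 / sphereEigenvalue m (k + 1)) ^ 2) atTop
      (nhds (π ^ 2 / 6)) := by
  have heq (m k : ℕ) : (m : ℝ) ^ 2 * (1 / sphereEigenvalue m (k + 1)) ^ 2
      = ((m : ℝ) / (m + ((k : ℝ) + 1))) ^ 2 * (1 / ((k : ℝ) + 1) ^ 2) := by
    rw [sphereEigenvalue, Nat.cast_add_one]
    field_simp
    ring
  simp only [← tsum_mul_left, heq]
  rw [← hasSum_one_div_succ_sq.tsum_eq]
  refine tendsto_tsum_of_dominated_convergence hasSum_one_div_succ_sq.summable (fun k => ?_)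
    (.of_forall fun m k => ?_)
  · simpa only [one_pow, one_mul] using
      ((tendsto_natCast_div_add_atTop ((k : ℝ) + 1)).pow 2).mul_const (1 / ((k : ℝ) + 1) ^ 2)
  · rw [Real.norm_of_nonneg (by positivity)]
    refine mul_le_of_le_one_left (by positivity) (pow_le_one₀ (by positivity) ?_)
    exact div_le_one_of_le₀ (by linarith [k.cast_nonneg (α := ℝ)]) (by positivity)

end SphereEigenvalue

section Ultraspherical

open Polynomial

/-- The degree-raising operator on polynomials in `x = cos u` for the weight `sin u ^ m`, given by
`d/du (-sin u ^ (m + 1) * Q (cos u)) = sin u ^ m * (gegenbauerRaise m Q) (cos u)`. Up to sign it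
is adjoint to differentiation, from the weight `sin ^ (m + 2)` to the weight `sin ^ m`. -/
noncomputable def gegenbauerRaise (m : ℕ) (Q : ℝ[X]) : ℝ[X] :=
  (1 - X ^ 2) * derivative Q - C ((m : ℝ) + 1) * X * Q

/-- `ultraspherical m k` is the ultraspherical (Gegenbauer) polynomial of degree `k` in `x = cos u`,
orthogonal for `sin u ^ m du` on `[0, π]`. The Rodrigues-type recursion fixes a normalisation
different from the classical one, which would degenerate at `m = 0`. -/
noncomputable def ultraspherical : ℕ → ℕ → ℝ[X]
  | _, 0 => 1
  | m, k + 1 => gegenbauerRaise m (ultraspherical (m + 2) k)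

theorem ultraspherical_zero (m : ℕ) : ultraspherical m 0 = 1 := rfl

theorem derivative_gegenbauerRaise_gegenbauerRaise {m : ℕ} {R : ℝ[X]} {c : ℝ}
    (hR : derivative (gegenbauerRaise (m + 2) R) = -(C c * R)) :
    derivative (gegenbauerRaise m (gegenbauerRaise (m + 2) R))
      = -(C (c + (m + 1)) * gegenbauerRaise (m + 2) R) := by
  rw [gegenbauerRaise, derivative_sub, derivative_mul, derivative_mul, hR]
  simp only [gegenbauerRaise, derivative_neg, derivative_mul, derivative_sub, derivative_one,
    derivative_X_pow, derivative_C, derivative_X, Nat.cast_add, Nat.cast_ofNat, C_add, map_one,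
    map_natCast, map_ofNat, derivative_natCast, derivative_add]
  ring

theorem derivative_ultraspherical_succ (m k : ℕ) :
    derivative (ultraspherical m (k + 1))
      = -(C (sphereEigenvalue m (k + 1)) * ultraspherical (m + 2) k) := by
  rw [← sphereEigenvalue_add_two_add]
  induction k generalizing m with
  | zero =>
    simp [ultraspherical, gegenbauerRaise, sphereEigenvalue]
  | succ k ih =>
    refine derivative_gegenbauerRaise_gegenbauerRaise ?_
    rw [← sphereEigenvalue_add_two_add]
    exact ih (m + 2)

theorem degree_ultraspherical (m k : ℕ) : (ultraspherical m k).degree = k := by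
  induction k generalizing m with
  | zero => exact degree_one
  | succ k ih =>
    have hder : (derivative (ultraspherical m (k + 1))).degree = k := by
      rw [derivative_ultraspherical_succ, degree_neg,
        degree_C_mul (sphereEigenvalue_succ_pos m k).ne', ih]
    have hne : (ultraspherical m (k + 1)).natDegree ≠ 0 := fun h => by
      rw [derivative_of_natDegree_zero h, degree_zero] at hder
      exact WithBot.bot_ne_coe hder
    rw [degree_derivative hne, Nat.cast_inj] at hder
    rw [degree_eq_iff_natDegree_eq_of_pos k.succ_pos]
    lia

/-- The ultraspherical polynomials for a fixed weight, bundled as a `Polynomial.Sequence` so that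
they are known to span all polynomials. -/
noncomputable def ultrasphericalSequence (m : ℕ) : Polynomial.Sequence ℝ where
  elems' := ultraspherical m
  degree_eq' := degree_ultraspherical m

theorem hasDerivAt_sin_pow_mul_eval_cos (m : ℕ) (Q : ℝ[X]) (u : ℝ) :
    HasDerivAt (fun u => -(sin u ^ (m + 1) * Q.eval (cos u)))
      (sin u ^ m * (gegenbauerRaise m Q).eval (cos u)) u := by
  have hQ := (Q.hasDerivAt (cos u)).comp u (hasDerivAt_cos u)
  refine (((hasDerivAt_sin u).pow (m + 1)).mul hQ).neg.congr_deriv ?_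
  simp only [gegenbauerRaise, eval_sub, eval_mul, eval_pow, eval_X, eval_C, eval_one,
    Function.comp_apply, Nat.add_sub_cancel, Nat.cast_add, Nat.cast_one, Pi.pow_apply]
  rw [← sin_sq]
  ring

@[fun_prop]
theorem continuous_eval_cos (p : ℝ[X]) : Continuous fun u => p.eval (cos u) :=
  p.continuous.comp continuous_cos

theorem integral_sin_pow_mul_ultraspherical_succ (m k : ℕ) (s : ℝ) :
    ∫ u in (0 : ℝ)..s, sin u ^ m * (ultraspherical m (k + 1)).eval (cos u)
      = -(sin s ^ (m + 1) * (ultraspherical (m + 2) k).eval (cos s)) := by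
  rw [ultraspherical, intervalIntegral.integral_eq_sub_of_hasDerivAt
    (fun u _ => hasDerivAt_sin_pow_mul_eval_cos m (ultraspherical (m + 2) k) u)
    (Continuous.intervalIntegrable (by fun_prop) ..)]
  simp only [sin_zero, ne_eq, Nat.succ_ne_zero, not_false_eq_true, zero_pow, zero_mul, neg_zero,
    sub_zero]

/-- The inner product of polynomials in `cos u` for the weight `sin u ^ m` on `[0, π]`. -/
noncomputable def sinPowInner (m : ℕ) (p q : ℝ[X]) : ℝ :=
  ∫ u in (0 : ℝ)..π, sin u ^ m * (p.eval (cos u) * q.eval (cos u))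

theorem sinPowInner_comm (m : ℕ) (p q : ℝ[X]) : sinPowInner m p q = sinPowInner m q p := by
  simp only [sinPowInner, mul_comm (eval _ p)]

theorem sinPowInner_gegenbauerRaise_left (m : ℕ) (Q R : ℝ[X]) :
    sinPowInner m (gegenbauerRaise m Q) R = -sinPowInner (m + 2) Q (derivative R) := by
  have hparts := intervalIntegral.integral_mul_deriv_eq_deriv_mul (a := 0) (b := π)
    (u := fun u => R.eval (cos u))
    (fun u _ => (R.hasDerivAt (cos u)).comp u (hasDerivAt_cos u))
    (fun u _ => hasDerivAt_sin_pow_mul_eval_cos m Q u)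
    (Continuous.intervalIntegrable (by fun_prop) ..)
    (Continuous.intervalIntegrable (by fun_prop) ..)
  simp only [sin_zero, sin_pi, ne_eq, Nat.succ_ne_zero, not_false_eq_true, zero_pow, zero_mul,
    neg_zero, mul_zero, sub_zero, zero_sub] at hparts
  calc sinPowInner m (gegenbauerRaise m Q) R
      = ∫ u in (0 : ℝ)..π,
          R.eval (cos u) * (sin u ^ m * (gegenbauerRaise m Q).eval (cos u)) := by
        rw [sinPowInner]
        congr with u
        ring
    _ = -∫ u in (0 : ℝ)..π,
          (derivative R).eval (cos u) * -sin u * -(sin u ^ (m + 1) * Q.eval (cos u)) := hparts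
    _ = -sinPowInner (m + 2) Q (derivative R) := by
        congr with u
        ring

theorem sinPowInner_ultraspherical_succ (m j k : ℕ) :
    sinPowInner m (ultraspherical m (j + 1)) (ultraspherical m (k + 1))
      = sphereEigenvalue m (k + 1)
        * sinPowInner (m + 2) (ultraspherical (m + 2) j) (ultraspherical (m + 2) k) := by
  rw [ultraspherical, sinPowInner_gegenbauerRaise_left, derivative_ultraspherical_succ]
  simp only [sinPowInner, eval_neg, eval_mul, eval_C, ← intervalIntegral.integral_neg,
    ← intervalIntegral.integral_const_mul]
  congr with u
  ring

theorem sinPowInner_ultraspherical_of_ne (m : ℕ) {j k : ℕ} (hjk : j ≠ k) :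
    sinPowInner m (ultraspherical m j) (ultraspherical m k) = 0 := by
  have hzero (m k : ℕ) : sinPowInner m (ultraspherical m (k + 1)) 1 = 0 := by
    rw [ultraspherical, sinPowInner_gegenbauerRaise_left, derivative_one]
    simp only [sinPowInner, eval_zero, mul_zero, intervalIntegral.integral_zero, neg_zero]
  induction j generalizing m k with
  | zero =>
    obtain ⟨k, rfl⟩ := Nat.exists_eq_succ_of_ne_zero hjk.symm
    exact (sinPowInner_comm ..).trans (hzero m k)
  | succ j ih =>
    cases k with
    | zero => exact hzero m j
    | succ k => rw [sinPowInner_ultraspherical_succ, ih _ (mt (congrArg _) hjk), mul_zero]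

theorem sinPowInner_ultraspherical_self_pos (m k : ℕ) :
    0 < sinPowInner m (ultraspherical m k) (ultraspherical m k) := by
  induction k generalizing m with
  | zero =>
    simp only [sinPowInner, ultraspherical, eval_one, mul_one]
    exact integral_sin_pow_pos m
  | succ k ih =>
    rw [sinPowInner_ultraspherical_succ]
    exact mul_pos (sphereEigenvalue_succ_pos m k) (ih (m + 2))

end Ultraspherical

section SphereMeasure

open MeasureTheory

/-- The radial part `sin u ^ m du` of the volume of the `(m + 1)`-sphere. It lives on the subtype
`[0, π]`, a compact space, as needed for the Stone–Weierstrass theorem. -/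
noncomputable def sinPowMeasure (m : ℕ) : Measure (Set.Icc (0 : ℝ) π) :=
  (volume.withDensity fun u : ℝ => ENNReal.ofReal (sin u ^ m)).comap (↑)

theorem setIntegral_sinPowMeasure (m : ℕ) (f : ℝ → ℝ) {S : Set ℝ} (hS : MeasurableSet S) :
    ∫ u in (↑) ⁻¹' S, f u ∂sinPowMeasure m = ∫ u in S ∩ Set.Icc 0 π, sin u ^ m * f u := by
  rw [sinPowMeasure, ← (MeasurableEmbedding.subtype_coe measurableSet_Icc).setIntegral_map,
    map_comap_subtype_coe measurableSet_Icc, Measure.restrict_restrict hS,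
    setIntegral_withDensity_eq_setIntegral_toReal_smul (by fun_prop)
    (.of_forall fun _ => ENNReal.ofReal_lt_top) _ (hS.inter measurableSet_Icc)]
  refine setIntegral_congr_fun (hS.inter measurableSet_Icc) fun u hu => ?_
  rw [ENNReal.toReal_ofReal (pow_nonneg (sin_nonneg_of_mem_Icc hu.2) m), smul_eq_mul]

theorem setIntegral_Iic_sinPowMeasure (m : ℕ) (f : ℝ → ℝ) (s : Set.Icc (0 : ℝ) π) :
    ∫ u in Set.Iic s, f u ∂sinPowMeasure m = ∫ u in (0 : ℝ)..s, sin u ^ m * f u := by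
  have h : Set.Iic (s : ℝ) ∩ Set.Icc 0 π = Set.Icc 0 (s : ℝ) := by
    ext u
    exact ⟨fun hu => ⟨hu.2.1, hu.1⟩, fun hu => ⟨hu.2, hu.1, hu.2.trans s.2.2⟩⟩
  rw [intervalIntegral.integral_of_le s.2.1, ← integral_Icc_eq_integral_Ioc, ← h]
  exact setIntegral_sinPowMeasure m f measurableSet_Iic

theorem setIntegral_Ioi_sinPowMeasure (m : ℕ) (f : ℝ → ℝ) (s : Set.Icc (0 : ℝ) π) :
    ∫ u in Set.Ioi s, f u ∂sinPowMeasure m = ∫ u in (s : ℝ)..π, sin u ^ m * f u := by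
  have h : Set.Ioi (s : ℝ) ∩ Set.Icc 0 π = Set.Ioc (s : ℝ) π := by
    ext u
    exact ⟨fun hu => ⟨hu.1, hu.2.2⟩, fun hu => ⟨hu.1, s.2.1.trans hu.1.le, hu.2⟩⟩
  rw [intervalIntegral.integral_of_le s.2.2, ← h]
  exact setIntegral_sinPowMeasure m f measurableSet_Ioi

theorem integral_sinPowMeasure (m : ℕ) (f : ℝ → ℝ) :
    ∫ u, f u ∂sinPowMeasure m = ∫ u in (0 : ℝ)..π, sin u ^ m * f u := by
  rw [← setIntegral_Iic_sinPowMeasure m f ⟨π, pi_pos.le, le_rfl⟩, ← setIntegral_univ]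
  congr 2
  exact (Set.eq_univ_of_forall fun u => u.2.2).symm

instance (m : ℕ) : IsFiniteMeasure (sinPowMeasure m) := by
  have : IsLocallyFiniteMeasure (volume.withDensity fun u : ℝ => ENNReal.ofReal (sin u ^ m)) :=
    .withDensity_ofReal (by fun_prop)
  have : IsFiniteMeasureOnCompacts (sinPowMeasure m) :=
    .comap' _ continuous_subtype_val (.subtype_coe measurableSet_Icc)
  exact CompactSpace.isFiniteMeasure

instance (m : ℕ) : NullSingletonClass (sinPowMeasure m) where
  measure_singleton u := by
    rw [sinPowMeasure, (MeasurableEmbedding.subtype_coe measurableSet_Icc).comap_apply,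
      Set.image_singleton, measure_singleton]

end SphereMeasure

section CapCovariance

open MeasureTheory

/-- The volume of the geodesic ball of radius `s` in the `(m + 1)`-sphere, up to the area of the
unit `m`-sphere; this is the paper's `I_{m+1}(s)`. -/
noncomputable def sinPowIntegral (m : ℕ) (s : ℝ) : ℝ :=
  ∫ u in (0 : ℝ)..s, sin u ^ m

theorem sinPowIntegral_pi_pos (m : ℕ) : 0 < sinPowIntegral m π := integral_sin_pow_pos m

theorem sinPowIntegral_pi (m : ℕ) : sinPowIntegral m π = 2 * sinPowIntegral m (π / 2) := by
  have hreflect : ∫ u in (0 : ℝ)..π / 2, cos u ^ m = sinPowIntegral m (π / 2) := by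
    simp only [← sin_pi_div_two_sub]
    rw [intervalIntegral.integral_comp_sub_left fun u => sin u ^ m, sub_self, sub_zero,
      sinPowIntegral]
  rw [← hreflect, EulerSine.integral_cos_pow_eq, sinPowIntegral]
  ring

/-- The covariance of the indicators of two concentric caps of radii `s` and `t` for the volume of
the `(m + 1)`-sphere, up to a factor depending only on `m`. -/
noncomputable def capCovariance (m : ℕ) (s t : ℝ) : ℝ :=
  sinPowIntegral m (min s t) - sinPowIntegral m s * sinPowIntegral m t / sinPowIntegral m π

theorem capCovariance_comm (m : ℕ) (s t : ℝ) : capCovariance m s t = capCovariance m t s := by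
  rw [capCovariance, capCovariance, min_comm, mul_comm (sinPowIntegral m s)]

theorem capCovariance_of_le (m : ℕ) {s t : ℝ} (hst : s ≤ t) :
    capCovariance m s t
      = sinPowIntegral m s * (sinPowIntegral m π - sinPowIntegral m t) / sinPowIntegral m π := by
  have := (sinPowIntegral_pi_pos m).ne'
  rw [capCovariance, min_eq_left hst]
  field_simp

theorem hasSum_integral_ultraspherical_mul_integral_div (m : ℕ) (s t : Set.Icc (0 : ℝ) π) :
    HasSum (fun k => (∫ u in (0 : ℝ)..s, sin u ^ m * (ultraspherical m k).eval (cos u))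
        * (∫ u in (0 : ℝ)..t, sin u ^ m * (ultraspherical m k).eval (cos u))
        / sinPowInner m (ultraspherical m k) (ultraspherical m k))
      (sinPowIntegral m (min s t)) := by
  let f : C(Set.Icc (0 : ℝ) π, ℝ) := ⟨fun u => cos u, by fun_prop⟩
  have hf : Function.Injective f := fun u v huv => Subtype.ext (injOn_cos u.2 v.2 huv)
  have hinner (p q : Polynomial ℝ) :
      ∫ u, p.eval (f u) * q.eval (f u) ∂sinPowMeasure m = sinPowInner m p q :=
    integral_sinPowMeasure m fun u => p.eval (cos u) * q.eval (cos u)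
  have hsq (k : ℕ) : ∫ u, (ultrasphericalSequence m k).eval (f u) ^ 2 ∂sinPowMeasure m
      = sinPowInner m (ultraspherical m k) (ultraspherical m k) := by
    simp only [sq]
    exact hinner _ _
  have hcap (k : ℕ) (r : Set.Icc (0 : ℝ) π) :
      ∫ u in Set.Iic r, (ultrasphericalSequence m k).eval (f u) ∂sinPowMeasure m
        = ∫ u in (0 : ℝ)..r, sin u ^ m * (ultraspherical m k).eval (cos u) :=
    setIntegral_Iic_sinPowMeasure m (fun u => (ultraspherical m k).eval (cos u)) r
  have hmass : (sinPowMeasure m).real (Set.Iic s ∩ Set.Iic t) = sinPowIntegral m (min s t) := by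
    have h := setIntegral_Iic_sinPowMeasure m (fun _ => 1) (min s t)
    simp only [mul_one, setIntegral_const, smul_eq_mul] at h
    rwa [Set.Iic_inter_Iic, ← (Subtype.mono_coe _).map_min]
  have hsum := hasSum_setIntegral_mul_setIntegral_div_integral_sq (μ := sinPowMeasure m) hf
    (ultrasphericalSequence m)
    (fun j k hjk => (hinner _ _).trans (sinPowInner_ultraspherical_of_ne m hjk))
    (fun k => (hsq k).symm ▸ sinPowInner_ultraspherical_self_pos m k)
    (measurableSet_Iic (a := s)) (measurableSet_Iic (a := t))
  simpa only [hcap, hsq, hmass] using hsum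

theorem hasSum_capCovariance (m : ℕ) (s t : Set.Icc (0 : ℝ) π) :
    HasSum (fun k => (sin s ^ (m + 1) * (ultraspherical (m + 2) k).eval (cos s))
        * (sin t ^ (m + 1) * (ultraspherical (m + 2) k).eval (cos t))
        / sinPowInner m (ultraspherical m (k + 1)) (ultraspherical m (k + 1)))
      (capCovariance m s t) := by
  have hsum := (hasSum_nat_add_iff' 1).2 (hasSum_integral_ultraspherical_mul_integral_div m s t)
  simpa only [capCovariance, sinPowIntegral, integral_sin_pow_mul_ultraspherical_succ, neg_mul_neg,
    Finset.sum_range_one, ultraspherical_zero, Polynomial.eval_one, mul_one, sinPowInner] using hsum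

/-- The eigenfunctions of the kernel `capCovariance m s t / (sin s ^ m * sin t ^ m)` for the weight
`sin ^ m`. They are scaled to have squared norm equal to their eigenvalue, so that the kernel is
the plain sum of `capEigenfunction m k s * capEigenfunction m k t`. -/
noncomputable def capEigenfunction (m k : ℕ) (s : ℝ) : ℝ :=
  sin s * (ultraspherical (m + 2) k).eval (cos s)
    / √(sinPowInner m (ultraspherical m (k + 1)) (ultraspherical m (k + 1)))

theorem continuous_capEigenfunction (m k : ℕ) : Continuous (capEigenfunction m k) := by
  unfold capEigenfunction
  fun_prop

/-- At the poles both sides vanish, for `m ≠ 0` through the convention `x / 0 = 0`. -/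
theorem hasSum_capEigenfunction_mul (m : ℕ) (s t : Set.Icc (0 : ℝ) π) :
    HasSum (fun k => capEigenfunction m k s * capEigenfunction m k t)
      (capCovariance m s t / (sin s ^ m * sin t ^ m)) := by
  refine ((hasSum_capCovariance m s t).div_const _).congr_fun fun k => ?_
  have hsqrt := mul_self_sqrt (sinPowInner_ultraspherical_self_pos m (k + 1)).le
  have hsin (x : ℝ) : sin x ^ (m + 1) / sin x ^ m = sin x := by
    by_cases hx : sin x ^ m = 0
    · rw [hx, div_zero, eq_zero_of_pow_eq_zero hx]
    · rw [pow_succ', mul_div_cancel_right₀ _ hx]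
  rw [capEigenfunction, capEigenfunction, div_mul_div_comm, hsqrt]
  nth_rw 1 [← hsin s, ← hsin t]
  ring

theorem integral_capEigenfunction_mul (m j k : ℕ) :
    ∫ s, capEigenfunction m j s * capEigenfunction m k s ∂sinPowMeasure m
      = sinPowInner (m + 2) (ultraspherical (m + 2) j) (ultraspherical (m + 2) k)
        / (√(sinPowInner m (ultraspherical m (j + 1)) (ultraspherical m (j + 1)))
          * √(sinPowInner m (ultraspherical m (k + 1)) (ultraspherical m (k + 1)))) := by
  rw [integral_sinPowMeasure m fun s => capEigenfunction m j s * capEigenfunction m k s,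
    sinPowInner, ← intervalIntegral.integral_div]
  congr with s
  rw [capEigenfunction, capEigenfunction, div_mul_div_comm]
  ring

theorem integral_capEigenfunction_mul_of_ne (m : ℕ) {j k : ℕ} (hjk : j ≠ k) :
    ∫ s, capEigenfunction m j s * capEigenfunction m k s ∂sinPowMeasure m = 0 := by
  rw [integral_capEigenfunction_mul, sinPowInner_ultraspherical_of_ne _ hjk, zero_div]

theorem integral_capEigenfunction_sq (m k : ℕ) :
    ∫ s, capEigenfunction m k s ^ 2 ∂sinPowMeasure m = 1 / sphereEigenvalue m (k + 1) := by
  have hpos := sinPowInner_ultraspherical_self_pos m (k + 1)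
  simp only [sq]
  rw [integral_capEigenfunction_mul, mul_self_sqrt hpos.le, sinPowInner_ultraspherical_succ]
  have := sinPowInner_ultraspherical_self_pos (m + 2) k
  have := sphereEigenvalue_succ_pos m k
  field_simp

theorem hasSum_one_div_sphereEigenvalue_sq (m : ℕ) :
    HasSum (fun k => (1 / sphereEigenvalue m (k + 1)) ^ 2)
      (∫ p : Set.Icc (0 : ℝ) π × Set.Icc (0 : ℝ) π,
        (capCovariance m p.1 p.2 / (sin p.1 ^ m * sin p.2 ^ m)) ^ 2
          ∂(sinPowMeasure m).prod (sinPowMeasure m)) := by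
  refine hasSum_sq_integral_sq_of_hasSum_mul (fun k => ?_)
    (fun j k hjk => integral_capEigenfunction_mul_of_ne m hjk)
    (integral_capEigenfunction_sq m) ?_ (hasSum_capEigenfunction_mul m)
  · exact Continuous.memLp_of_hasCompactSupport
      ((continuous_capEigenfunction m k).comp continuous_subtype_val) (.of_compactSpace _)
  · exact .of_nonneg_of_le (fun k => (one_div_pos.2 (sphereEigenvalue_succ_pos m k)).le)
      (one_div_sphereEigenvalue_succ_le m) hasSum_one_div_succ_sq.summable

theorem mul_div_mul_sq {F : Type*} [Field F] (a b x : F) :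
    x * (a / (b * x)) ^ 2 = (a / b) ^ 2 / x := by
  rcases eq_or_ne x 0 with rfl | hx
  · rw [zero_mul, div_zero]
  · field_simp

theorem setIntegral_Ioi_capCovariance_div_sq (m : ℕ) (s : Set.Icc (0 : ℝ) π) :
    ∫ t in Set.Ioi s, (capCovariance m s t / (sin s ^ m * sin t ^ m)) ^ 2 ∂sinPowMeasure m
      = (sinPowIntegral m s / (sinPowIntegral m π * sin s ^ m)) ^ 2
        * ∫ t in (s : ℝ)..π, (sinPowIntegral m π - sinPowIntegral m t) ^ 2 / sin t ^ m := by
  rw [setIntegral_Ioi_sinPowMeasure m fun t => (capCovariance m s t / (sin s ^ m * sin t ^ m)) ^ 2,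
    ← intervalIntegral.integral_const_mul]
  refine intervalIntegral.integral_congr fun t ht => ?_
  rw [Set.uIcc_of_le s.2.2] at ht
  rw [capCovariance_of_le m ht.1, mul_div_mul_sq]
  ring

/-- The variance of the covering time of the dual radial diffusion on the `(m + 1)`-sphere, in its
double-integral form. -/
noncomputable def coveringVariance (m : ℕ) : ℝ :=
  2 / sinPowIntegral m π ^ 2 * ∫ s in (0 : ℝ)..π, sinPowIntegral m s ^ 2 / sin s ^ m
    * ∫ t in s..π, (sinPowIntegral m π - sinPowIntegral m t) ^ 2 / sin t ^ m

theorem hasSum_coveringVariance (m : ℕ) :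
    HasSum (fun k => (1 / sphereEigenvalue m (k + 1)) ^ 2) (coveringVariance m) := by
  have hsum := hasSum_one_div_sphereEigenvalue_sq m
  have hpos (k : ℕ) : 0 < (1 / sphereEigenvalue m (k + 1)) ^ 2 :=
    pow_pos (one_div_pos.2 (sphereEigenvalue_succ_pos m k)) 2
  have hint : Integrable (fun p : Set.Icc (0 : ℝ) π × Set.Icc (0 : ℝ) π =>
      (capCovariance m p.1 p.2 / (sin p.1 ^ m * sin p.2 ^ m)) ^ 2)
      ((sinPowMeasure m).prod (sinPowMeasure m)) := by
    refine .of_integral_ne_zero (ne_of_gt ?_)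
    rw [← hsum.tsum_eq]
    exact hsum.summable.tsum_pos (fun k => (hpos k).le) 0 (hpos 0)
  rw [integral_prod_self_eq_two_smul_integral_setIntegral_Ioi hint
    fun p => by rw [Prod.fst_swap, Prod.snd_swap, capCovariance_comm, mul_comm (sin _ ^ m)]] at hsum
  convert hsum using 1
  unfold coveringVariance
  simp only [setIntegral_Ioi_capCovariance_div_sq]
  rw [integral_sinPowMeasure m fun s =>
    (sinPowIntegral m s / (sinPowIntegral m π * sin s ^ m)) ^ 2
        * ∫ t in (s : ℝ)..π, (sinPowIntegral m π - sinPowIntegral m t) ^ 2 / sin t ^ m,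
    smul_eq_mul, div_mul_eq_mul_div, mul_div_assoc, ← intervalIntegral.integral_div]
  congr with s
  rw [← mul_assoc, mul_div_mul_sq]
  ring

end CapCovariance

theorem sphere_variance_asymptotics
    (I : ℕ → ℝ → ℝ) (hI : ∀ n x, I n x = ∫ s in (0:ℝ)..x, Real.sin s ^ (n - 1))
    (W : ℕ → ℝ) (hW : ∀ n, W n = ∫ s in (0:ℝ)..(π/2), Real.sin s ^ (n - 1))
    (V : ℕ → ℝ)
    (hV : ∀ n : ℕ, 2 ≤ n → V n = (2 / (2 * W n)^2) *
      ∫ u in (0:ℝ)..π, ((I n u)^2 / Real.sin u ^ (n - 1)) *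
        ∫ s in u..π, (2 * W n - I n s)^2 / Real.sin s ^ (n - 1)) :
    Tendsto (fun n : ℕ => ((n:ℝ) - 1)^2 * V n) atTop (nhds (π^2 / 6)) := by
  have hI' (m : ℕ) (x : ℝ) : I (m + 1) x = sinPowIntegral m x := hI (m + 1) x
  have hW' (m : ℕ) : 2 * W (m + 1) = sinPowIntegral m π := by
    rw [hW, sinPowIntegral_pi]
    rfl
  have hV' (m : ℕ) (hm : 1 ≤ m) : V (m + 1) = ∑' k, (1 / sphereEigenvalue m (k + 1)) ^ 2 := by
    rw [hV (m + 1) (Nat.succ_le_succ hm), (hasSum_coveringVariance m).tsum_eq, coveringVariance]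
    simp only [hI', hW', Nat.add_sub_cancel]
  rw [← tendsto_add_atTop_iff_nat 1]
  refine tendsto_sq_mul_tsum_one_div_sphereEigenvalue_sq.congr' ?_
  filter_upwards [eventually_ge_atTop 1] with m hm
  rw [hV' m hm, Nat.cast_add_one, add_sub_cancel_right]
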